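/- Let h be a complex number with exp(h) ≠ 1 and let [x] = (exp(hx/2) − exp(−hx/2))/(exp(h/2) − exp(−h/2)) for x ∈ ℂ. Let k ≥ 1 be an integer and let complex numbers L_{i,2k−1} (i ∈ [1−k, k−1]), L_{i,2k} (i ∈ [−k, k−1]), L_{i,2k+1} (i ∈ [−k, k]) and L_{i,2k+2} (i ∈ [−k−1, k]) be given such that [L_{i,2k} − L_{j,2k} + t] ≠ 0 for all i ≠ j in [−k, k−1] and t ∈ {−1, 0, 1}, and [L_{i,2k+1} − L_{l,2k+1} + t] ≠ 0 for all i ≠ l in [−k, k] and t ∈ {−1, 0, 1}. Then ∑_{s=0}^{1} ∑_{j=−k}^{k−1} ∑_{l=−k}^{k} (−1)^s · ( ∏_{i≠l, i=−k}^{k} [L_{i,2k+1} − L_{j,2k} − s + 1] · ∏_{i=1−k}^{k−1} [L_{i,2k−1} − L_{j,2k} − s + 1] ) / ( ∏_{i≠j, i=−k}^{k−1} [L_{i,2k} − L_{j,2k} − s][L_{i,2k} − L_{j,2k} − s + 1] ) · ( ∏_{i=−k−1}^{k} [L_{i,2k+2} − L_{l,2k+1} − s] · ∏_{i≠j, i=−k}^{k−1}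 [L_{i,2k} − L_{l,2k+1} − s] ) / ( ∏_{i≠l, i=−k}^{k} [L_{i,2k+1} − L_{l,2k+1} − s][L_{i,2k+1} − L_{l,2k+1} − s + 1] ) = [ ∑_{j=−k−1}^{k} L_{j,2k+2} − ∑_{j=−k}^{k} L_{j,2k+1} − ∑_{j=−k}^{k−1} L_{j,2k} + ∑_{j=−k+1}^{k−1} L_{j,2k−1} − 1 ]. (Identity (23b).) -/

import Mathlib

/-- The q-bracket `[x] = (exp(hx/2) - exp(-hx/2))/(exp(h/2) - exp(-h/2))`. -/
noncomputable def qbr (h x : ℂ) : ℂ :=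
  (Complex.exp (h * x / 2) - Complex.exp (-(h * x) / 2)) /
    (Complex.exp (h / 2) - Complex.exp (-h / 2))

/-- `q ^ z`. -/
noncomputable def qp (h z : ℂ) : ℂ := Complex.exp (h * z / 2)

lemma qp_add (h x y : ℂ) : qp h (x + y) = qp h x * qp h y := by
  unfold qp; rw [← Complex.exp_add]; congr 1; ring

lemma qp_ne (h x : ℂ) : qp h x ≠ 0 := Complex.exp_ne_zero _

lemma qp_neg_mul (h x : ℂ) : qp h (-x) * qp h x = 1 := by
  rw [← qp_add]; simp [qp]

lemma qp_sum {ι : Type*} (h : ℂ) (s : Finset ι) (f : ι → ℂ) :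
    qp h (∑ i ∈ s, f i) = ∏ i ∈ s, qp h (f i) := by
  unfold qp; rw [← Complex.exp_sum, Finset.mul_sum, Finset.sum_div]

lemma qp_negh (h x : ℂ) : qp (-h) x = qp h (-x) := by
  unfold qp; congr 1; ring

lemma qbr_eq (h x : ℂ) : qbr h x = (qp h x - qp h (-x)) / (qp h 1 - qp h (-1)) := by
  unfold qbr qp
  congr 3 <;> congr 1 <;> ring

lemma qbr_negh (h x : ℂ) : qbr (-h) x = qbr h x := by
  rw [qbr_eq, qbr_eq]; simp only [qp_negh, neg_neg]
  rw [← neg_sub, ← neg_sub (qp h 1), neg_div_neg_eq]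

lemma qden_ne (h : ℂ) (hh : Complex.exp h ≠ 1) : qp h 1 - qp h (-1) ≠ 0 := by
  intro h0
  apply hh
  have h1 := qp_neg_mul h 1
  have h2 : qp h 1 = qp h (-1) := sub_eq_zero.mp h0
  rw [← h2, ← qp_add] at h1
  rw [← h1]; unfold qp; congr 1; ring

lemma qbr_neg (h x : ℂ) : qbr h (-x) = - qbr h x := by
  rw [qbr_eq, qbr_eq, neg_neg, ← neg_div, neg_sub]

lemma qbr_one (h : ℂ) (hh : Complex.exp h ≠ 1) : qbr h 1 = 1 := by
  rw [qbr_eq, div_self (qden_ne h hh)]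

lemma qbr_sub_eq (h x y : ℂ) : qbr h (y - x) =
    (-1 / (qp h 1 - qp h (-1))) * (qp h (-x) * qp h (-y)) * (qp h x ^ 2 - qp h y ^ 2) := by
  rw [qbr_eq, show -(y - x) = x + -y by ring, show y - x = y + -x by ring, qp_add, qp_add]
  linear_combination (qp h y * qp h (-x) * (qp_neg_mul h y) - qp h x * qp h (-y) * (qp_neg_mul h x))
    * (-1 / (qp h 1 - qp h (-1)))

open Polynomial in
lemma G1 {ι κ : Type*} [DecidableEq ι] (h : ℂ) (hh : Complex.exp h ≠ 1)
    (s : Finset ι) (x : ι → ℂ) (t : Finset κ) (Y : κ → ℂ) (hc : t.card + 1 = s.card)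
    (hx : ∀ i ∈ s, ∀ j ∈ s, i ≠ j → qbr h (x i - x j) ≠ 0) :
    ∑ j ∈ s, qp h (x j) * ((∏ i ∈ t, qbr h (Y i - x j)) / ∏ i ∈ s.erase j, qbr h (x i - x j))
      = qp h (∑ i ∈ s, x i - ∑ i ∈ t, Y i) := by
  have hinj : Set.InjOn (fun i => qp h (x i) ^ 2) s := by
    intro i hi j hj hij
    by_contra hne
    apply hx i hi j hj hne
    rw [qbr_sub_eq]; simp only at hij; rw [hij]; ring
  have key := Lagrange.leadingCoeff_eq_sum (P := ∏ i ∈ t, (X - C (qp h (Y i) ^ 2))) hinj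
    (by rw [Polynomial.degree_prod]; simp only [degree_X_sub_C]; simp [← hc])
  rw [(monic_prod_X_sub_C _ _).leadingCoeff] at key
  rw [← mul_one (qp h _), key, Finset.mul_sum]
  apply Finset.sum_congr rfl
  intro j hj
  simp only [qbr_sub_eq, Finset.prod_mul_distrib, Finset.prod_const, Finset.card_erase_of_mem hj,
    ← qp_sum, eval_prod, eval_sub, eval_X, eval_C, Finset.sum_neg_distrib]
  have hs : s.card - 1 = t.card := by omega
  have e1 : ∑ i ∈ s, x i = x j + ∑ i ∈ s.erase j, x i := (Finset.add_sum_erase s x hj).symm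
  have e2 : ∏ i ∈ s.erase j, (qp h (x j) ^ 2 - qp h (x i) ^ 2) ≠ 0 := by
    rw [Finset.prod_ne_zero_iff]
    intro i hi h0
    exact Finset.ne_of_mem_erase hi (hinj (Finset.mem_of_mem_erase hi) hj (sub_eq_zero.mp h0).symm)
  have e3 := qden_ne h hh
  have e4 : (-1 / (qp h 1 - qp h (-1))) ^ t.card ≠ 0 := pow_ne_zero _ (div_ne_zero (by norm_num) e3)
  have e5 := qp_neg_mul h (∑ i ∈ s.erase j, x i)
  have e6 := qp_ne h (-∑ i ∈ s.erase j, x i)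
  have e7 := pow_ne_zero t.card (qp_ne h (- x j))
  rw [hs, e1, sub_eq_add_neg (_ + _) (∑ i ∈ t, Y i), qp_add, qp_add]
  generalize (-1 / (qp h 1 - qp h (-1))) ^ t.card = u at *
  field_simp
  linear_combination (-(qp h (x j) * qp h (-∑ i ∈ t, Y i) *
    ∏ i ∈ t, (qp h (x j) ^ 2 - qp h (Y i) ^ 2))) * e5

lemma G2 {ι κ : Type*} [DecidableEq ι] [DecidableEq κ] (h : ℂ) (hh : Complex.exp h ≠ 1)
    (s : Finset ι) (x : ι → ℂ) (t : Finset κ) (Y : κ → ℂ) (hc : t.card = s.card)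
    (hs : s.Nonempty)
    (hx : ∀ i ∈ s, ∀ j ∈ s, i ≠ j → qbr h (x i - x j) ≠ 0) :
    ∑ j ∈ s, ((∏ i ∈ t, qbr h (Y i - x j)) / ∏ i ∈ s.erase j, qbr h (x i - x j))
      = qbr h (∑ i ∈ t, Y i - ∑ i ∈ s, x i) := by
  have ht : t.Nonempty := by rw [← Finset.card_pos, hc, Finset.card_pos]; exact hs
  obtain ⟨m, hm⟩ := ht
  have hc' : (t.erase m).card + 1 = s.card := by rw [Finset.card_erase_add_one hm, hc]
  have k1 := G1 h hh s x (t.erase m) Y hc' hx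
  have k2 := G1 (-h) (by rw [Complex.exp_neg]; simpa using hh) s x (t.erase m) Y hc'
    (by simpa only [qbr_negh] using hx)
  simp only [qbr_negh, qp_negh] at k2
  have e1 : ∑ i ∈ t, Y i = Y m + ∑ i ∈ t.erase m, Y i := (Finset.add_sum_erase t Y hm).symm
  rw [qbr_eq h (∑ i ∈ t, Y i - ∑ i ∈ s, x i), e1,
    show Y m + ∑ i ∈ t.erase m, Y i - ∑ i ∈ s, x i
      = Y m + -(∑ i ∈ s, x i - ∑ i ∈ t.erase m, Y i) by ring, neg_add, neg_neg, qp_add, qp_add,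
    ← k1, ← k2, Finset.mul_sum, Finset.mul_sum, ← Finset.sum_sub_distrib, Finset.sum_div]
  apply Finset.sum_congr rfl
  intro j hj
  rw [← Finset.mul_prod_erase t _ hm, qbr_eq h (Y m - x j), sub_eq_add_neg (Y m), neg_add, neg_neg,
    qp_add, qp_add]
  ring

/-- the doubled node lemma -/
lemma dbl_erase_inl {J : Finset ℤ} (j : ℤ) :
    (J.disjSum J).erase (Sum.inl j) = (J.erase j).disjSum J := by
  ext (i | i) <;> simp
lemma dbl_erase_inr {J : Finset ℤ} (j : ℤ) :
    (J.disjSum J).erase (Sum.inr j) = J.disjSum (J.erase j) := by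
  ext (i | i) <;> simp

/-- doubled nodes `C j`, `C j + 1` -/
noncomputable def nd (C : ℤ → ℂ) : ℤ ⊕ ℤ → ℂ := Sum.elim C (fun i => C i + 1)

lemma nd_ne (h : ℂ) (hh : Complex.exp h ≠ 1) (J : Finset ℤ) (C : ℤ → ℂ)
    (hC : ∀ i ∈ J, ∀ j ∈ J, i ≠ j →
      ∀ t ∈ ({-1, 0, 1} : Finset ℤ), qbr h (C i - C j + (t : ℂ)) ≠ 0) :
    ∀ i ∈ J.disjSum J, ∀ j ∈ J.disjSum J, i ≠ j → qbr h (nd C i - nd C j) ≠ 0 := by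
  rintro (i | i) hi (j | j) hj hij <;> simp [nd] at hi hj hij ⊢
  · simpa using hC i hi j hj hij 0 (by simp)
  · by_cases e : i = j
    · subst e
      rw [show C i - (C i + 1) = -1 by ring, qbr_neg, qbr_one h hh]; norm_num
    · have := hC i hi j hj e (-1) (by simp)
      rw [show C i - (C j + 1) = C i - C j + ((-1 : ℤ) : ℂ) by push_cast; ring]; exact this
  · by_cases e : i = j
    · subst e
      rw [show (C i + 1) - C i = 1 by ring, qbr_one h hh]; norm_num
    · have := hC i hi j hj e 1 (by simp)
      rw [show C i + 1 - C j = C i - C j + ((1 : ℤ) : ℂ) by push_cast; ring]; exact this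
  · simpa using hC i hi j hj hij 0 (by simp)

lemma nd_inl (h : ℂ) (hh : Complex.exp h ≠ 1) (J : Finset ℤ) (C : ℤ → ℂ) (j : ℤ) (hj : j ∈ J) :
    ∏ i ∈ (J.disjSum J).erase (Sum.inl j), qbr h (nd C i - nd C (Sum.inl j)) =
      ∏ i ∈ J.erase j, (qbr h (C i - C j) * qbr h (C i - C j + 1)) := by
  rw [dbl_erase_inl, Finset.prod_disjSum, ← Finset.mul_prod_erase J _ hj, Finset.prod_mul_distrib]
  simp only [nd, Sum.elim_inl, Sum.elim_inr]
  rw [show C j + 1 - C j = 1 by ring, qbr_one h hh, one_mul]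
  congr 1
  exact Finset.prod_congr rfl fun i _ => by congr 1; ring

lemma nd_inr (h : ℂ) (hh : Complex.exp h ≠ 1) (J : Finset ℤ) (C : ℤ → ℂ) (j : ℤ) (hj : j ∈ J) :
    ∏ i ∈ (J.disjSum J).erase (Sum.inr j), qbr h (nd C i - nd C (Sum.inr j)) =
      - ∏ i ∈ J.erase j, (qbr h (C i - C j - 1) * qbr h (C i - C j - 1 + 1)) := by
  rw [dbl_erase_inr, Finset.prod_disjSum, ← Finset.mul_prod_erase J _ hj, Finset.prod_mul_distrib]
  simp only [nd, Sum.elim_inl, Sum.elim_inr]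
  rw [show C j - (C j + 1) = -1 by ring, qbr_neg, qbr_one h hh, mul_assoc, neg_one_mul]
  congr 2
  · exact Finset.prod_congr rfl fun i _ => by congr 1; ring
  · exact Finset.prod_congr rfl fun i _ => by congr 1; ring

lemma nd_sum (J : Finset ℤ) (C : ℤ → ℂ) :
    ∑ i ∈ J.disjSum J, nd C i = 2 * ∑ i ∈ J, C i + J.card := by
  rw [Finset.sum_disjSum]; simp [nd, Finset.sum_add_distrib]; ring

lemma D1 {κ : Type*} (h : ℂ) (hh : Complex.exp h ≠ 1) (J : Finset ℤ) (C : ℤ → ℂ)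
    (hC : ∀ i ∈ J, ∀ j ∈ J, i ≠ j →
      ∀ t ∈ ({-1, 0, 1} : Finset ℤ), qbr h (C i - C j + (t : ℂ)) ≠ 0)
    (t : Finset κ) (Y : κ → ℂ) (hc : t.card + 1 = J.card + J.card) :
    ∑ j ∈ J, (qp h (C j) * ((∏ i ∈ t, qbr h (Y i - C j)) /
        ∏ i ∈ J.erase j, (qbr h (C i - C j) * qbr h (C i - C j + 1)))
      - qp h (C j + 1) * ((∏ i ∈ t, qbr h (Y i - C j - 1)) /
        ∏ i ∈ J.erase j, (qbr h (C i - C j - 1) * qbr h (C i - C j - 1 + 1))))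
      = qp h (2 * ∑ i ∈ J, C i + J.card - ∑ i ∈ t, Y i) := by
  have k := G1 h hh (J.disjSum J) (nd C) t Y (by rw [Finset.card_disjSum, hc]) (nd_ne h hh J C hC)
  rw [nd_sum, Finset.sum_disjSum, ← Finset.sum_add_distrib] at k
  rw [← k]
  apply Finset.sum_congr rfl
  intro j hj
  rw [nd_inl h hh J C j hj, nd_inr h hh J C j hj]
  simp only [nd, Sum.elim_inl, Sum.elim_inr, sub_sub, div_neg, mul_neg]
  ring

lemma D2 {κ : Type*} [DecidableEq κ] (h : ℂ) (hh : Complex.exp h ≠ 1) (J : Finset ℤ) (C : ℤ → ℂ)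
    (hC : ∀ i ∈ J, ∀ j ∈ J, i ≠ j →
      ∀ t ∈ ({-1, 0, 1} : Finset ℤ), qbr h (C i - C j + (t : ℂ)) ≠ 0) (hJ : J.Nonempty)
    (t : Finset κ) (Y : κ → ℂ) (hc : t.card = J.card + J.card) :
    ∑ j ∈ J, (((∏ i ∈ t, qbr h (Y i - C j)) /
        ∏ i ∈ J.erase j, (qbr h (C i - C j) * qbr h (C i - C j + 1)))
      - ((∏ i ∈ t, qbr h (Y i - C j - 1)) /
        ∏ i ∈ J.erase j, (qbr h (C i - C j - 1) * qbr h (C i - C j - 1 + 1))))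
      = qbr h (∑ i ∈ t, Y i - (2 * ∑ i ∈ J, C i + J.card)) := by
  have k := G2 h hh (J.disjSum J) (nd C) t Y (by rw [Finset.card_disjSum, hc])
    (by obtain ⟨j, hj⟩ := hJ; exact ⟨Sum.inl j, by simpa using hj⟩) (nd_ne h hh J C hC)
  rw [nd_sum, Finset.sum_disjSum, ← Finset.sum_add_distrib] at k
  rw [← k]
  apply Finset.sum_congr rfl
  intro j hj
  rw [nd_inl h hh J C j hj, nd_inr h hh J C j hj]
  simp only [nd, Sum.elim_inl, Sum.elim_inr, sub_sub, div_neg]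
  ring

/-- The purely algebraic summation argument. -/
lemma alg (J K : Finset ℤ) (a b a' b' p r w v : ℤ → ℤ → ℂ) (α α' β β' : ℤ → ℂ) (K1 K2 : ℂ)
    (hpr : ∀ j ∈ J, ∀ l ∈ K, p j l * v j l - r j l * w j l = 1)
    (ha : ∀ j ∈ J, ∀ l ∈ K, α j = a j l * v j l)
    (ha' : ∀ j ∈ J, ∀ l ∈ K, α' j = a' j l * w j l)
    (hb : ∀ j ∈ J, ∀ l ∈ K, β l = - (b j l * w j l))
    (hb' : ∀ j ∈ J, ∀ l ∈ K, β' l = - (b' j l * v j l))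
    (h1 : ∀ l ∈ K, ∑ j ∈ J, (r j l * a j l - p j l * a' j l) = K1)
    (h2 : ∀ j ∈ J, ∑ l ∈ K, (p j l * b j l - r j l * b' j l) = K2) :
    ∑ j ∈ J, ∑ l ∈ K, (a j l * b j l - a' j l * b' j l) =
      K2 * ∑ j ∈ J, (α j - α' j) + K1 * ∑ l ∈ K, (β l - β' l) := by
  have e1 : K2 * ∑ j ∈ J, (α j - α' j) =
      ∑ j ∈ J, ∑ l ∈ K, (α j - α' j) * (p j l * b j l - r j l * b' j l) := by
    rw [Finset.mul_sum]
    exact Finset.sum_congr rfl fun j hj => by rw [← Finset.mul_sum, h2 j hj, mul_comm]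
  have e2 : K1 * ∑ l ∈ K, (β l - β' l) =
      ∑ j ∈ J, ∑ l ∈ K, (β l - β' l) * (r j l * a j l - p j l * a' j l) := by
    rw [Finset.sum_comm, Finset.mul_sum]
    exact Finset.sum_congr rfl fun l hl => by rw [← Finset.mul_sum, h1 l hl, mul_comm]
  rw [e1, e2, ← Finset.sum_add_distrib]
  refine Finset.sum_congr rfl fun j hj => ?_
  rw [← Finset.sum_add_distrib]
  refine Finset.sum_congr rfl fun l hl => ?_
  rw [ha j hj l hl, ha' j hj l hl, hb j hj l hl, hb' j hj l hl]
  linear_combination (-(a j l * b j l - a' j l * b' j l)) * hpr j hj l hl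

lemma core (h : ℂ) (hh : Complex.exp h ≠ 1) (J K P Q : Finset ℤ)
    (cK : K.card = J.card + 1) (cP : P.card + 1 = J.card) (cQ : Q.card = J.card + 2)
    (B C D E : ℤ → ℂ)
    (hC : ∀ i ∈ J, ∀ j ∈ J, i ≠ j →
      ∀ t ∈ ({-1, 0, 1} : Finset ℤ), qbr h (C i - C j + (t : ℂ)) ≠ 0)
    (hD : ∀ i ∈ K, ∀ l ∈ K, i ≠ l →
      ∀ t ∈ ({-1, 0, 1} : Finset ℤ), qbr h (D i - D l + (t : ℂ)) ≠ 0) :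
    ∑ s ∈ Finset.range 2, ∑ j ∈ J, ∑ l ∈ K,
      (-1 : ℂ) ^ s *
      (((∏ i ∈ K.erase l, qbr h (D i - C j - (s : ℂ) + 1)) *
          ∏ i ∈ P, qbr h (B i - C j - (s : ℂ) + 1)) /
        ∏ i ∈ J.erase j,
          qbr h (C i - C j - (s : ℂ)) * qbr h (C i - C j - (s : ℂ) + 1)) *
      (((∏ i ∈ Q, qbr h (E i - D l - (s : ℂ))) *
          ∏ i ∈ J.erase j, qbr h (C i - D l - (s : ℂ))) /
        ∏ i ∈ K.erase l,
          qbr h (D i - D l - (s : ℂ)) * qbr h (D i - D l - (s : ℂ) + 1))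
    = qbr h ((∑ j ∈ Q, E j) - (∑ j ∈ K, D j) - (∑ j ∈ J, C j) + (∑ j ∈ P, B j) - 1) := by
  have hh' : Complex.exp (-h) ≠ 1 := by rw [Complex.exp_neg]; simpa using hh
  set V : ℂ := (∑ j ∈ K, D j) + (∑ j ∈ P, B j) - 2 * (∑ j ∈ J, C j) + J.card with hV
  set W : ℂ := (∑ j ∈ Q, E j) + (∑ j ∈ J, C j) - 2 * (∑ j ∈ K, D j) - J.card - 1 with hW
  have main := alg J K
    (fun j l => ((∏ i ∈ K.erase l, qbr h (D i - C j + 1)) * ∏ i ∈ P, qbr h (B i - C j + 1)) /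
        ∏ i ∈ J.erase j, (qbr h (C i - C j) * qbr h (C i - C j + 1)))
    (fun j l => ((∏ i ∈ Q, qbr h (E i - D l)) * ∏ i ∈ J.erase j, qbr h (C i - D l)) /
        ∏ i ∈ K.erase l, (qbr h (D i - D l) * qbr h (D i - D l + 1)))
    (fun j l => ((∏ i ∈ K.erase l, qbr h (D i - C j - 1 + 1)) *
        ∏ i ∈ P, qbr h (B i - C j - 1 + 1)) /
        ∏ i ∈ J.erase j, (qbr h (C i - C j - 1) * qbr h (C i - C j - 1 + 1)))
    (fun j l => ((∏ i ∈ Q, qbr h (E i - D l - 1)) * ∏ i ∈ J.erase j, qbr h (C i - D l - 1)) /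
        ∏ i ∈ K.erase l, (qbr h (D i - D l - 1) * qbr h (D i - D l - 1 + 1)))
    (fun j l => qp h (C j - D l)) (fun j l => qp h (C j - D l - 1))
    (fun j l => qbr h (D l - C j)) (fun j l => qbr h (D l - C j + 1))
    (fun j => ((∏ i ∈ K, qbr h (D i - C j + 1)) * ∏ i ∈ P, qbr h (B i - C j + 1)) /
        ∏ i ∈ J.erase j, (qbr h (C i - C j) * qbr h (C i - C j + 1)))
    (fun j => ((∏ i ∈ K, qbr h (D i - C j - 1 + 1)) * ∏ i ∈ P, qbr h (B i - C j - 1 + 1)) /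
        ∏ i ∈ J.erase j, (qbr h (C i - C j - 1) * qbr h (C i - C j - 1 + 1)))
    (fun l => ((∏ i ∈ Q, qbr h (E i - D l)) * ∏ i ∈ J, qbr h (C i - D l)) /
        ∏ i ∈ K.erase l, (qbr h (D i - D l) * qbr h (D i - D l + 1)))
    (fun l => ((∏ i ∈ Q, qbr h (E i - D l - 1)) * ∏ i ∈ J, qbr h (C i - D l - 1)) /
        ∏ i ∈ K.erase l, (qbr h (D i - D l - 1) * qbr h (D i - D l - 1 + 1)))
    (qp h (-V)) (qp h W)
    (by
      intro j hj l hl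
      have e := qden_ne h hh
      have e1 := qp_neg_mul h (D l - C j)
      have e2 := qp_neg_mul h 1
      simp only [qbr_eq]
      rw [show C j - D l - 1 = -(D l - C j) + -1 by ring, show C j - D l = -(D l - C j) by ring,
        neg_add, qp_add, qp_add]
      field_simp
      linear_combination (qp h 1 - qp h (-1)) * e1)
    (by
      intro j hj l hl
      rw [← Finset.mul_prod_erase K _ hl]; ring)
    (by
      intro j hj l hl
      rw [← Finset.mul_prod_erase K _ hl, sub_add_cancel (D l - C j)]; ring)
    (by
      intro j hj l hl
      rw [← Finset.mul_prod_erase J _ hj, show C j - D l = -(D l - C j) by ring, qbr_neg]; ring)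
    (by
      intro j hj l hl
      rw [← Finset.mul_prod_erase J _ hj, show C j - D l - 1 = -(D l - C j + 1) by ring,
        qbr_neg]; ring)
    (by
      intro l hl
      have k := D1 h hh J C hC ((K.erase l).disjSum P)
        (Sum.elim (fun i => D i + 1) (fun i => B i + 1))
        (by rw [Finset.card_disjSum, Finset.card_erase_of_mem hl]; omega)
      have eD : ∑ i ∈ K, D i = D l + ∑ i ∈ K.erase l, D i := (Finset.add_sum_erase K D hl).symm
      have cP' : (P.card : ℂ) = J.card - 1 := by rw [← cP]; push_cast; ring
      have cKe : ((K.erase l).card : ℂ) = J.card := by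
        rw [Finset.card_erase_of_mem hl, cK, Nat.add_sub_cancel]
      simp only [Finset.prod_disjSum, Finset.sum_disjSum, Sum.elim_inl, Sum.elim_inr,
        Finset.sum_add_distrib, Finset.sum_const, nsmul_eq_mul, mul_one, cP', cKe] at k
      rw [show -V = (-D l - 1) + (2 * ∑ i ∈ J, C i + (J.card : ℂ) -
        (∑ i ∈ K.erase l, D i + J.card + (∑ i ∈ P, B i + (J.card - 1)))) by
          rw [hV, eD]; ring, qp_add, ← k, Finset.mul_sum]
      refine Finset.sum_congr rfl fun j _ => ?_
      rw [show C j - D l = (-D l - 1) + (C j + 1) by ring,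
        show (-D l - 1) + (C j + 1) - 1 = (-D l - 1) + C j by ring, qp_add, qp_add]
      simp only [add_sub_right_comm, sub_add_cancel, add_sub_cancel_right]
      ring)
    (by
      intro j hj
      have k := D1 (-h) hh' K D (by simpa only [qbr_negh] using hD) (Q.disjSum (J.erase j))
        (Sum.elim E C)
        (by rw [Finset.card_disjSum, Finset.card_erase_of_mem hj]; omega)
      have eC : ∑ i ∈ J, C i = C j + ∑ i ∈ J.erase j, C i := (Finset.add_sum_erase J C hj).symm
      simp only [Finset.prod_disjSum, Finset.sum_disjSum, Sum.elim_inl, Sum.elim_inr, qbr_negh,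
        qp_negh, cK, Nat.cast_add, Nat.cast_one] at k
      rw [show W = C j + -(2 * ∑ i ∈ K, D i + ((J.card : ℂ) + 1) -
        (∑ i ∈ Q, E i + ∑ i ∈ J.erase j, C i)) by
          rw [hW, eC]; ring, qp_add, ← k, Finset.mul_sum]
      refine Finset.sum_congr rfl fun l _ => ?_
      rw [show C j - D l - 1 = C j + -(D l + 1) by ring, sub_eq_add_neg (C j) (D l), qp_add, qp_add]
      ring)
  have jne : J.Nonempty := by rw [← Finset.card_pos]; omega
  have kne : K.Nonempty := by rw [← Finset.card_pos]; omega
  have sα := D2 h hh J C hC jne (K.disjSum P)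
    (Sum.elim (fun i => D i + 1) (fun i => B i + 1)) (by rw [Finset.card_disjSum]; omega)
  have sβ := D2 h hh K D hD kne (Q.disjSum J) (Sum.elim E C) (by rw [Finset.card_disjSum]; omega)
  have cP' : (P.card : ℂ) = J.card - 1 := by rw [← cP]; push_cast; ring
  simp only [Finset.prod_disjSum, Finset.sum_disjSum, Sum.elim_inl, Sum.elim_inr,
    Finset.sum_add_distrib, Finset.sum_const, nsmul_eq_mul, mul_one, cP', cK, Nat.cast_add,
    Nat.cast_one, add_sub_right_comm _ (1 : ℂ), sub_add_cancel, add_sub_cancel_right] at sα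
  simp only [Finset.prod_disjSum, Finset.sum_disjSum, Sum.elim_inl, Sum.elim_inr, cK,
    Nat.cast_add, Nat.cast_one] at sβ
  simp only [sub_add_cancel] at main sβ
  rw [sα, sβ] at main
  have fin : qp h W * qbr h V + qp h (-V) * qbr h W = qbr h (V + W) := by
    simp only [qbr_eq, neg_add, qp_add]; ring
  rw [show (∑ j ∈ Q, E j) - (∑ j ∈ K, D j) - (∑ j ∈ J, C j) + (∑ j ∈ P, B j) - 1 = V + W by
    rw [hV, hW]; ring, ← fin]
  trans
  · trans
    rotate_left
    · exact main
    · rw [Finset.sum_range_succ, Finset.sum_range_one, ← Finset.sum_add_distrib]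
      refine Finset.sum_congr rfl fun j _ => ?_
      rw [← Finset.sum_add_distrib]
      refine Finset.sum_congr rfl fun l _ => ?_
      simp only [Nat.cast_zero, sub_zero, Nat.cast_one, pow_zero, pow_one, sub_add_cancel]
      ring
  · congr 3
    · rw [hV]; ring
    · rw [hW]; ring


/-- Identity (23b).  `B i` stands for `L_{i,2k-1}`, `C i` for `L_{i,2k}`,
`D i` for `L_{i,2k+1}` and `E i` for `L_{i,2k+2}`. -/
theorem identity_23b (h : ℂ) (hh : Complex.exp h ≠ 1) (k : ℤ) (hk : 1 ≤ k)
    (B C D E : ℤ → ℂ)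
    (hC : ∀ i ∈ Finset.Icc (-k) (k - 1), ∀ j ∈ Finset.Icc (-k) (k - 1), i ≠ j →
      ∀ t ∈ ({-1, 0, 1} : Finset ℤ), qbr h (C i - C j + (t : ℂ)) ≠ 0)
    (hD : ∀ i ∈ Finset.Icc (-k) k, ∀ l ∈ Finset.Icc (-k) k, i ≠ l →
      ∀ t ∈ ({-1, 0, 1} : Finset ℤ), qbr h (D i - D l + (t : ℂ)) ≠ 0) :
    ∑ s ∈ Finset.range 2, ∑ j ∈ Finset.Icc (-k) (k - 1), ∑ l ∈ Finset.Icc (-k) k,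
      (-1 : ℂ) ^ s *
      (((∏ i ∈ (Finset.Icc (-k) k).erase l, qbr h (D i - C j - (s : ℂ) + 1)) *
          ∏ i ∈ Finset.Icc (1 - k) (k - 1), qbr h (B i - C j - (s : ℂ) + 1)) /
        ∏ i ∈ (Finset.Icc (-k) (k - 1)).erase j,
          qbr h (C i - C j - (s : ℂ)) * qbr h (C i - C j - (s : ℂ) + 1)) *
      (((∏ i ∈ Finset.Icc (-k - 1) k, qbr h (E i - D l - (s : ℂ))) *
          ∏ i ∈ (Finset.Icc (-k) (k - 1)).erase j, qbr h (C i - D l - (s : ℂ))) /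
        ∏ i ∈ (Finset.Icc (-k) k).erase l,
          qbr h (D i - D l - (s : ℂ)) * qbr h (D i - D l - (s : ℂ) + 1))
    = qbr h ((∑ j ∈ Finset.Icc (-k - 1) k, E j)
        - (∑ j ∈ Finset.Icc (-k) k, D j)
        - (∑ j ∈ Finset.Icc (-k) (k - 1), C j)
        + (∑ j ∈ Finset.Icc (-k + 1) (k - 1), B j) - 1) := by
  rw [show -k + 1 = 1 - k by ring]
  exact core h hh _ _ _ _ (by simp only [Int.card_Icc]; omega) (by simp only [Int.card_Icc]; omega)
    (by simp only [Int.card_Icc]; omega) B C D E hC hD
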